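/- For any 3-dimensional subspace π of Im 𝕆 with orthonormal basis f₁, f₂, f₃, one has |φ(f₁,f₂,f₃)| ≤ 1, with equality if and only if the associator [f₁,f₂,f₃] = 0. -/

import Mathlib

noncomputable section

open Quaternion

/-- Octonions as pairs of quaternions (Cayley–Dickson construction). -/
abbrev Octo : Type := ℍ[ℝ] × ℍ[ℝ]

/-- Octonion multiplication: (q,r)(s,t) = (qs - t̄r, tq + rs̄). -/
def omul (x y : Octo) : Octo :=
  (x.1 * y.1 - star y.2 * x.2, y.2 * x.1 + x.2 * star y.1)

/-- Octonion conjugation: (q,r)̄ = (q̄, -r). -/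
def oconj (x : Octo) : Octo := (star x.1, -x.2)

/-- Inner product ⟨x,y⟩ = (x ȳ + y x̄)/2 (a real multiple of 1, returned as a real). -/
def oinner (x y : Octo) : ℝ :=
  ((omul x (oconj y) + omul y (oconj x)).1).re / 2

/-- x is an imaginary octonion: x + x̄ = 0. -/
def IsIm (x : Octo) : Prop := x + oconj x = 0

/-- Embedding of the reals into the octonions. -/
def oR (r : ℝ) : Octo := ((r : ℍ[ℝ]), 0)

/-- Cross product x×y = (xy - yx)/2. -/
def ocross (x y : Octo) : Octo := (2⁻¹ : ℝ) • (omul x y - omul y x)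

/-- Norm of an octonion. -/
def onorm (x : Octo) : ℝ := Real.sqrt (oinner x x)

/-- Associator [x,y,z] = (xy)z - x(yz). -/
def oassoc (x y z : Octo) : Octo := omul (omul x y) z - omul x (omul y z)

/-- f₁,f₂,f₃ are orthonormal. -/
def OrthoTriple (f1 f2 f3 : Octo) : Prop :=
  oinner f1 f1 = 1 ∧ oinner f2 f2 = 1 ∧ oinner f3 f3 = 1 ∧
  oinner f1 f2 = 0 ∧ oinner f1 f3 = 0 ∧ oinner f2 f3 = 0


/-!
For imaginary `x`, `y`, `z`, alternativity and conjugation give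
`(xy)z + x(yz) = -2φ(x,y,z) - 2⟨x,y⟩z - 2⟨y,z⟩x + 2⟨x,z⟩y`, whose real and imaginary parts are
orthogonal, so its norm is explicit. Since both `(xy)z` and `x(yz)` have norm `|x||y||z|`, the
parallelogram law yields the norm of their difference: `|[x,y,z]|² = 4 (|x ∧ y ∧ z|² - φ(x,y,z)²)`.
-/

open Matrix WithLp

lemma det_gram_fin_three {E : Type*} [SeminormedAddCommGroup E] [InnerProductSpace ℝ E]
    (u v w : E) :
    (gram ℝ ![u, v, w]).det =
      inner ℝ u u * inner ℝ v v * inner ℝ w w +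
          2 * (inner ℝ u v * inner ℝ v w * inner ℝ u w) -
        (inner ℝ u v ^ 2 * inner ℝ w w + inner ℝ v w ^ 2 * inner ℝ u u +
          inner ℝ u w ^ 2 * inner ℝ v v) := by
  rw [det_fin_three]
  simp only [gram_apply, cons_val, real_inner_comm u v, real_inner_comm u w, real_inner_comm v w]
  ring

lemma quaternion_re_mul_comm {R : Type*} [CommRing R] (a b : ℍ[R]) : (a * b).re = (b * a).re := by
  simp only [Quaternion.re_mul]
  ring

-- `toLp 2` is needed because `Octo`, as a product type, carries the sup norm.
lemma oinner_eq_inner (x y : Octo) : oinner x y = inner ℝ (toLp 2 x) (toLp 2 y) := by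
  have re_symm (a b : ℍ[ℝ]) : (b * star a).re = (a * star b).re := by
    rw [← Quaternion.re_star, star_mul, star_star]
  simp only [prod_inner_apply, Quaternion.inner_def, oinner, omul, oconj, star_neg, neg_mul,
    sub_neg_eq_add, Prod.fst_add, Quaternion.re_add, quaternion_re_mul_comm (star _),
    re_symm x.1 y.1, re_symm x.2 y.2]
  ring

lemma oinner_comm (x y : Octo) : oinner x y = oinner y x := by
  rw [oinner_eq_inner, oinner_eq_inner, real_inner_comm]

lemma oinner_self_nonneg (x : Octo) : 0 ≤ oinner x x := by
  rw [oinner_eq_inner]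
  exact real_inner_self_nonneg

lemma oinner_self_eq_zero {x : Octo} : oinner x x = 0 ↔ x = 0 := by
  rw [oinner_eq_inner, inner_self_eq_zero, toLp_eq_zero]

lemma oinner_self_eq_normSq (x : Octo) :
    oinner x x = Quaternion.normSq x.1 + Quaternion.normSq x.2 := by
  rw [oinner_eq_inner, prod_inner_apply, Quaternion.inner_self, Quaternion.inner_self]

lemma oinner_add_left (x y z : Octo) : oinner (x + y) z = oinner x z + oinner y z := by
  simp only [oinner_eq_inner, toLp_add, inner_add_left]

lemma oinner_add_right (x y z : Octo) : oinner x (y + z) = oinner x y + oinner x z := by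
  simp only [oinner_eq_inner, toLp_add, inner_add_right]

lemma oinner_neg_left (x y : Octo) : oinner (-x) y = -oinner x y := by
  simp only [oinner_eq_inner, toLp_neg, inner_neg_left]

lemma oinner_smul_left (r : ℝ) (x y : Octo) : oinner (r • x) y = r * oinner x y := by
  simp only [oinner_eq_inner, toLp_smul, real_inner_smul_left]

lemma oinner_smul_right (r : ℝ) (x y : Octo) : oinner x (r • y) = r * oinner x y := by
  simp only [oinner_eq_inner, toLp_smul, real_inner_smul_right]

lemma oinner_parallelogram (x y : Octo) :
    oinner (x + y) (x + y) + oinner (x - y) (x - y) = 2 * (oinner x x + oinner y y) := by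
  simp only [oinner_eq_inner, toLp_add, toLp_sub, parallelogram_law]

lemma omul_add (x y z : Octo) : omul x (y + z) = omul x y + omul x z := by
  ext1 <;> simp only [omul, Prod.fst_add, Prod.snd_add, star_add] <;> noncomm_ring

lemma add_omul (x y z : Octo) : omul (x + y) z = omul x z + omul y z := by
  ext1 <;> simp only [omul, Prod.fst_add, Prod.snd_add] <;> noncomm_ring

lemma omul_neg (x y : Octo) : omul x (-y) = -omul x y := by
  ext1 <;> simp only [omul, Prod.fst_neg, Prod.snd_neg, star_neg] <;> noncomm_ring

lemma neg_omul (x y : Octo) : omul (-x) y = -omul x y := by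
  ext1 <;> simp only [omul, Prod.fst_neg, Prod.snd_neg] <;> noncomm_ring

lemma oR_neg (r : ℝ) : oR (-r) = -oR r := by
  simp [oR]

lemma smul_oR (r s : ℝ) : r • oR s = oR (r * s) := by
  simp [oR, Quaternion.smul_coe]

lemma oinner_oR_oR (r s : ℝ) : oinner (oR r) (oR s) = r * s := by
  simp [oinner_eq_inner, Quaternion.inner_def, oR]

lemma oR_omul (r : ℝ) (x : Octo) : omul (oR r) x = r • x := by
  ext1 <;> simp [omul, oR, Quaternion.coe_mul_eq_smul, Quaternion.mul_coe_eq_smul]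

lemma oconj_add (x y : Octo) : oconj (x + y) = oconj x + oconj y := by
  ext1 <;> simp [oconj, add_comm]

lemma oconj_oconj (x : Octo) : oconj (oconj x) = x := by
  simp [oconj]

lemma oconj_omul (x y : Octo) : oconj (omul x y) = omul (oconj y) (oconj x) := by
  ext1 <;> simp [omul, oconj]

lemma oinner_oconj_left (x y : Octo) : oinner (oconj x) y = oinner x (oconj y) := by
  simp [oinner_eq_inner, Quaternion.inner_def, oconj]

lemma oinner_omul_left (x y z : Octo) : oinner (omul x y) z = oinner x (omul z (oconj y)) := by
  simp only [oinner_eq_inner, prod_inner_apply, Quaternion.inner_def, omul, oconj, sub_mul, add_mul,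
    mul_sub, mul_add, star_sub, star_add, star_mul, star_star, star_neg, neg_mul, mul_neg,
    Quaternion.re_add, Quaternion.re_sub, Quaternion.re_neg, mul_assoc]
  rw [quaternion_re_mul_comm (star y.2), quaternion_re_mul_comm y.2]
  simp only [mul_assoc]
  ring

lemma omul_omul_oconj (x y : Octo) : omul (omul x y) (oconj y) = oinner y y • x := by
  have expand (a b c d : ℍ[ℝ]) :
      omul (omul (a, b) (c, d)) (oconj (c, d)) =
        (a * (c * star c) + (star d * d) * a, (d * star d) * b + b * (star c * c)) := by
    ext1
    · simp only [omul, oconj, star_neg]; noncomm_ring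
    · simp only [omul, oconj, star_star]; noncomm_ring
  rw [expand x.1 x.2 y.1 y.2, oinner_self_eq_normSq]
  simp only [Quaternion.self_mul_star, Quaternion.star_mul_self, Quaternion.coe_mul_eq_smul,
    Quaternion.mul_coe_eq_smul]
  ext1 <;> simp only [Prod.smul_fst, Prod.smul_snd] <;> module

lemma omul_omul_oconj_add_swap (x y z : Octo) :
    omul (omul x y) (oconj z) + omul (omul x z) (oconj y) = (2 * oinner y z) • x := by
  have h := omul_omul_oconj x (y + z)
  simp only [oconj_add, omul_add, add_omul, omul_omul_oconj, oinner_add_left, oinner_add_right,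
    oinner_comm z y] at h
  linear_combination (norm := module) h

lemma omul_oconj_add_swap (x y : Octo) :
    omul x (oconj y) + omul y (oconj x) = oR (2 * oinner x y) := by
  have h := omul_omul_oconj_add_swap (oR 1) x y
  simpa only [oR_omul, one_smul, smul_oR, mul_one] using h

lemma oinner_omul_self (x y : Octo) :
    oinner (omul x y) (omul x y) = oinner x x * oinner y y := by
  rw [oinner_omul_left, omul_omul_oconj, oinner_smul_right, mul_comm]

namespace IsIm

variable {x y z : Octo}

lemma oconj_eq (hx : IsIm x) : oconj x = -x :=
  eq_neg_of_add_eq_zero_right hx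

lemma omul_omul_add_swap (x : Octo) (hy : IsIm y) (hz : IsIm z) :
    omul (omul x y) z + omul (omul x z) y = (-2 * oinner y z) • x := by
  have h := omul_omul_oconj_add_swap x y z
  rw [hy.oconj_eq, hz.oconj_eq, omul_neg, omul_neg] at h
  linear_combination (norm := module) -h

lemma omul_add_swap (hx : IsIm x) (hy : IsIm y) :
    omul x y + omul y x = oR (-2 * oinner x y) := by
  have h := omul_oconj_add_swap x y
  rw [hx.oconj_eq, hy.oconj_eq, omul_neg, omul_neg] at h
  rw [neg_mul, oR_neg, ← h]
  abel

lemma omul_add_oconj (hx : IsIm x) (y : Octo) :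
    omul x y + oconj (omul x y) = oR (-2 * oinner x y) := by
  have h := omul_oconj_add_swap x (oconj y)
  rwa [oconj_oconj, ← oconj_omul, ← oinner_oconj_left, hx.oconj_eq, oinner_neg_left, mul_neg,
    ← neg_mul] at h

lemma omul_omul_add_omul_omul (hx : IsIm x) (hy : IsIm y) (hz : IsIm z) :
    omul (omul x y) z + omul x (omul y z) =
      oR (-2 * oinner x (omul y z)) +
        ((-2 * oinner x y) • z + (-2 * oinner y z) • x + (2 * oinner x z) • y) := by
  have swap_yx : omul (omul z y) x + omul (omul z x) y = (-2 * oinner x y) • z := by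
    rw [oinner_comm x y, omul_omul_add_swap z hy hx]
  have swap_zx : omul (omul z x) y + omul (omul x z) y = (-2 * oinner x z) • y := by
    rw [← add_omul, hz.omul_add_swap hx, oR_omul, oinner_comm z x]
  have swap_zy : omul (omul x z) y + omul (omul x y) z = (-2 * oinner y z) • x := by
    rw [oinner_comm y z, omul_omul_add_swap x hz hy]
  have reverse : omul x (omul y z) - omul (omul z y) x = oR (-2 * oinner x (omul y z)) := by
    rw [← hx.omul_add_oconj, oconj_omul, oconj_omul, hx.oconj_eq, hy.oconj_eq, hz.oconj_eq]
    simp only [omul_neg, neg_omul, neg_neg, sub_eq_add_neg]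
  linear_combination (norm := module) swap_yx - swap_zx + swap_zy + reverse

lemma oinner_oR_left (r : ℝ) (hx : IsIm x) : oinner (oR r) x = 0 := by
  have hre : x.1.re = 0 := by
    have h := congrArg (fun w : Octo ↦ w.1.re) hx
    simpa [oconj] using h
  simp [oinner_eq_inner, Quaternion.inner_def, oR, hre]

lemma oinner_oR_right (r : ℝ) (hx : IsIm x) : oinner x (oR r) = 0 := by
  rw [oinner_comm, hx.oinner_oR_left]

lemma oinner_self_omul_omul_add_omul_omul (hx : IsIm x) (hy : IsIm y) (hz : IsIm z) :
    oinner (omul (omul x y) z + omul x (omul y z)) (omul (omul x y) z + omul x (omul y z)) =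
      4 * (oinner x (omul y z) ^ 2 + oinner x y ^ 2 * oinner z z + oinner y z ^ 2 * oinner x x +
        oinner x z ^ 2 * oinner y y - 2 * (oinner x y * oinner y z * oinner x z)) := by
  rw [omul_omul_add_omul_omul hx hy hz]
  simp only [oinner_add_left, oinner_add_right, oinner_smul_left, oinner_smul_right,
    oinner_oR_oR, hx.oinner_oR_left, hy.oinner_oR_left, hz.oinner_oR_left, hx.oinner_oR_right,
    hy.oinner_oR_right, hz.oinner_oR_right, oinner_comm y x, oinner_comm z x, oinner_comm z y]
  ring

lemma oinner_self_oassoc (hx : IsIm x) (hy : IsIm y) (hz : IsIm z) :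
    oinner (oassoc x y z) (oassoc x y z) =
      4 * ((gram ℝ ![toLp 2 x, toLp 2 y, toLp 2 z]).det - oinner x (omul y z) ^ 2) := by
  have parallelogram := oinner_parallelogram (omul (omul x y) z) (omul x (omul y z))
  rw [oinner_self_omul_omul_add_omul_omul hx hy hz] at parallelogram
  simp only [oinner_omul_self] at parallelogram
  simp only [det_gram_fin_three, ← oinner_eq_inner, oassoc]
  linear_combination parallelogram

end IsIm

lemma OrthoTriple.orthonormal {x y z : Octo} (h : OrthoTriple x y z) :
    Orthonormal ℝ ![toLp 2 x, toLp 2 y, toLp 2 z] := by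
  simp only [OrthoTriple, oinner_eq_inner, real_inner_self_eq_norm_sq,
    pow_eq_one_iff_of_nonneg (norm_nonneg _) two_ne_zero] at h
  obtain ⟨hx, hy, hz, hxy, hxz, hyz⟩ := h
  simp [orthonormal_vecCons_iff, hx, hy, hz, hxy, hxz, hyz, -prod_inner_apply]

-- The square root of the Gram determinant is the norm of the 3-vector `x ∧ y ∧ z`.
theorem stmt10_general (x y z : Octo) (hx : IsIm x) (hy : IsIm y) (hz : IsIm z) :
    |oinner x (omul y z)| ≤ √(gram ℝ ![toLp 2 x, toLp 2 y, toLp 2 z]).det ∧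
    (|oinner x (omul y z)| = √(gram ℝ ![toLp 2 x, toLp 2 y, toLp 2 z]).det ↔ oassoc x y z = 0) := by
  have norm_sq := hx.oinner_self_oassoc hy hz
  have sq_le : oinner x (omul y z) ^ 2 ≤ (gram ℝ ![toLp 2 x, toLp 2 y, toLp 2 z]).det := by
    linarith [oinner_self_nonneg (oassoc x y z)]
  refine ⟨Real.abs_le_sqrt sq_le, ?_⟩
  rw [← Real.sqrt_sq_eq_abs, Real.sqrt_inj (sq_nonneg _) ((sq_nonneg _).trans sq_le),
    ← oinner_self_eq_zero, norm_sq]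
  constructor <;> intro h <;> linarith

/-- |φ(f₁,f₂,f₃)| ≤ 1, with equality iff the associator vanishes. -/
theorem stmt10 (f1 f2 f3 : Octo) (h1 : IsIm f1) (h2 : IsIm f2) (h3 : IsIm f3)
    (hortho : OrthoTriple f1 f2 f3) :
    |oinner f1 (omul f2 f3)| ≤ 1 ∧
    (|oinner f1 (omul f2 f3)| = 1 ↔ oassoc f1 f2 f3 = 0) := by
  simpa [gram_eq_one_iff_orthonormal.mpr hortho.orthonormal] using stmt10_general f1 f2 f3 h1 h2 h3
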